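/- arXiv:2003.11002 — 2 statements merged into one kernel-verified Lean document; each statement's English description precedes it below -/
import Mathlib

section
/- Let H be a real or complex Hilbert space, n ≥ 2, and let L be a continuous symmetric n-linear form on H that attains its norm, i.e., there exist unit vectors x₁,…,x_n ∈ H with |L(x₁,…,x_n)| = ‖L‖. Then the associated continuous n-homogeneous polynomial L̂(x) = L(x,…,x) also attains its norm on the closed unit ball, and ‖L‖ = ‖L̂‖. -/
open Metric

/-!
Call a tuple `v` of unit vectors norming if `‖L v‖ = ‖L‖`. With `p = v i + v j` and
`m = v i - v j`, polarizing in the slots `i` and `j` gives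
`4 * ‖L‖ ≤ ‖L (…, p, …, p, …)‖ + ‖L‖ * ‖m‖ ^ 2`, so by the parallelogram law
`‖L (…, p, …, p, …)‖ = ‖L‖ * ‖p‖ ^ 2`. Hence replacing both `v i` and `v j` by `p / ‖p‖` again
gives a norming tuple; so does replacing `v i` by `-v i`.

In finite dimension the norming tuples form a compact set, on which `‖∑ k, v k‖` attains a maximum.
At a maximum every `v i` has positive inner product with the sum (else flip its sign), and then
`v i = v j`, since otherwise passing to `p / ‖p‖` would lengthen the sum. The general case follows
by restricting `L` to the span of a norming tuple.
-/

theorem norm_lt_norm_add_of_re_inner_nonneg {𝕜 E : Type*} [RCLike 𝕜] [NormedAddCommGroup E]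
    [InnerProductSpace 𝕜 E] {x y : E} (hxy : 0 ≤ RCLike.re (inner 𝕜 x y)) (hy : y ≠ 0) :
    ‖x‖ < ‖x + y‖ := by
  have hy_pos : 0 < ‖y‖ := norm_pos_iff.mpr hy
  refine lt_of_pow_lt_pow_left₀ 2 (norm_nonneg _) ?_
  rw [norm_add_sq (𝕜 := 𝕜)]
  nlinarith

theorem eq_of_norm_le_one_of_two_le_norm_add (𝕜 : Type*) {E : Type*} [RCLike 𝕜]
    [NormedAddCommGroup E] [InnerProductSpace 𝕜 E] {x y : E} (hx : ‖x‖ ≤ 1) (hy : ‖y‖ ≤ 1)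
    (hxy : 2 ≤ ‖x + y‖) : x = y := by
  have hpar := parallelogram_law_with_norm 𝕜 x y
  have hx_sq : ‖x‖ ^ 2 ≤ 1 := pow_le_one₀ (norm_nonneg x) hx
  have hy_sq : ‖y‖ ^ 2 ≤ 1 := pow_le_one₀ (norm_nonneg y) hy
  have hsub : ‖x - y‖ = 0 := by nlinarith [norm_nonneg (x - y)]
  exact sub_eq_zero.mp (norm_eq_zero.mp hsub)

theorem sum_update_eq_sum_add_sub {ι M : Type*} [Fintype ι] [DecidableEq ι] [AddCommGroup M]
    (v : ι → M) (i : ι) (a : M) :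
    ∑ k, Function.update v i a k = ∑ k, v k + (a - v i) := by
  rw [Finset.sum_update_of_mem (Finset.mem_univ i), Finset.sdiff_singleton_eq_erase,
    ← Finset.add_sum_erase _ v (Finset.mem_univ i)]
  abel

theorem forall_norm_update_eq_one {ι E : Type*} [DecidableEq ι] [Norm E] {v : ι → E}
    (hv : ∀ k, ‖v k‖ = 1) (i : ι) {a : E} (ha : ‖a‖ = 1) :
    ∀ k, ‖Function.update v i a k‖ = 1 :=
  (Function.forall_update_iff v fun _ x => ‖x‖ = 1).mpr ⟨ha, fun k _ => hv k⟩

theorem apply_update_update_comm_of_symmetric {ι α β : Type*} [DecidableEq ι] {f : (ι → α) → β}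
    (hsym : ∀ (σ : Equiv.Perm ι) (v : ι → α), f (v ∘ σ) = f v)
    {i j : ι} (hij : i ≠ j) (v : ι → α) (a b : α) :
    f (Function.update (Function.update v i a) j b) =
      f (Function.update (Function.update v i b) j a) := by
  rw [← hsym (Equiv.swap i j)]
  congr 1
  ext k
  rcases eq_or_ne k i with rfl | hki
  · simp [hij]
  rcases eq_or_ne k j with rfl | hkj
  · simp [hij]
  · simp [Equiv.swap_apply_of_ne_of_ne hki hkj, hki, hkj]

theorem map_update_update_add_sub_map_update_update_sub {R ι M N : Type*} [Ring R] [DecidableEq ι]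
    [AddCommGroup M] [Module R M] [AddCommGroup N] [Module R N]
    {f : MultilinearMap R (fun _ : ι => M) N}
    (hsym : ∀ (σ : Equiv.Perm ι) (v : ι → M), f (v ∘ σ) = f v)
    {i j : ι} (hij : i ≠ j) (v : ι → M) (a b : M) :
    f (Function.update (Function.update v i (a + b)) j (a + b)) -
        f (Function.update (Function.update v i (a - b)) j (a - b)) =
      4 • f (Function.update (Function.update v i a) j b) := by
  have add_left (x y z : M) :
      f (Function.update (Function.update v i (x + y)) j z) =
        f (Function.update (Function.update v i x) j z) +
          f (Function.update (Function.update v i y) j z) := by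
    simp only [Function.update_comm hij, f.map_update_add]
  have sub_left (x y z : M) :
      f (Function.update (Function.update v i (x - y)) j z) =
        f (Function.update (Function.update v i x) j z) -
          f (Function.update (Function.update v i y) j z) := by
    simp only [Function.update_comm hij, f.map_update_sub]
  rw [f.map_update_add, f.map_update_sub, add_left, add_left, sub_left, sub_left,
    apply_update_update_comm_of_symmetric hsym hij v b a]
  abel

theorem norm_map_update_update_le {𝕜 ι E F : Type*} [NontriviallyNormedField 𝕜] [Fintype ι]
    [DecidableEq ι] [SeminormedAddCommGroup E] [NormedSpace 𝕜 E]
    [SeminormedAddCommGroup F] [NormedSpace 𝕜 F]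
    (L : ContinuousMultilinearMap 𝕜 (fun _ : ι => E) F) {v : ι → E} (hv : ∀ k, ‖v k‖ ≤ 1)
    {i j : ι} (hij : i ≠ j) (a b : E) :
    ‖L (Function.update (Function.update v i a) j b)‖ ≤ ‖L‖ * (‖a‖ * ‖b‖) := by
  have h_bound (k : ι) : ‖Function.update (Function.update v i a) j b k‖ ≤
      Function.update (Function.update (fun _ => (1 : ℝ)) i ‖a‖) j ‖b‖ k := by
    rcases eq_or_ne k j with rfl | hkj
    · simp
    rcases eq_or_ne k i with rfl | hki
    · simp [hij]
    · simpa [hki, hkj] using hv k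
  refine (L.le_opNorm_mul_prod_of_le h_bound).trans_eq ?_
  rw [Fintype.prod_eq_mul i j hij fun k hk => by simp [hk.1, hk.2]]
  simp [hij]

/-- A tuple of unit vectors at which the continuous multilinear map `L` attains its operator
norm. -/
structure IsNormingTuple {𝕜 ι E F : Type*} [NontriviallyNormedField 𝕜] [Fintype ι]
    [SeminormedAddCommGroup E] [NormedSpace 𝕜 E] [SeminormedAddCommGroup F] [NormedSpace 𝕜 F]
    (L : ContinuousMultilinearMap 𝕜 (fun _ : ι => E) F) (v : ι → E) : Prop where
  norm_eq_one : ∀ i, ‖v i‖ = 1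
  norm_map : ‖L v‖ = ‖L‖

namespace IsNormingTuple

section NormedSpace

variable {𝕜 ι E F : Type*} [NontriviallyNormedField 𝕜] [Fintype ι]
  [SeminormedAddCommGroup E] [NormedSpace 𝕜 E] [SeminormedAddCommGroup F] [NormedSpace 𝕜 F]
  {L : ContinuousMultilinearMap 𝕜 (fun _ : ι => E) F} {v : ι → E}

theorem update_neg [DecidableEq ι] (hv : IsNormingTuple L v) (i : ι) :
    IsNormingTuple L (Function.update v i (-v i)) where
  norm_eq_one := forall_norm_update_eq_one hv.norm_eq_one i (by rw [norm_neg, hv.norm_eq_one])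
  norm_map := by
    rw [← neg_one_smul 𝕜, L.map_update_smul, Function.update_eq_self, neg_one_smul, norm_neg,
      hv.norm_map]

theorem compContinuousLinearMap_linearIsometry {E' : Type*} [SeminormedAddCommGroup E']
    [NormedSpace 𝕜 E'] (φ : E' →ₗᵢ[𝕜] E) {w : ι → E'} (hw : IsNormingTuple L (φ ∘ w)) :
    IsNormingTuple (L.compContinuousLinearMap fun _ => φ.toContinuousLinearMap) w where
  norm_eq_one i := by simpa using hw.norm_eq_one i
  norm_map := by
    have h_le := (L.compContinuousLinearMap fun _ => φ.toContinuousLinearMap).unit_le_opNorm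
      ((pi_norm_le_iff_of_nonneg zero_le_one).mpr fun i => by simpa using (hw.norm_eq_one i).le)
    have h_ge := L.norm_compContinuous_linearIsometry_le fun _ => φ
    exact le_antisymm h_le (h_ge.trans_eq hw.norm_map.symm)

theorem comp_linearIsometry {E' : Type*} [SeminormedAddCommGroup E']
    [NormedSpace 𝕜 E'] {φ : E' →ₗᵢ[𝕜] E} {w u : ι → E'} (hw : IsNormingTuple L (φ ∘ w))
    (hu : IsNormingTuple (L.compContinuousLinearMap fun _ => φ.toContinuousLinearMap) u) :
    IsNormingTuple L (φ ∘ u) where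
  norm_eq_one i := by simpa using hu.norm_eq_one i
  norm_map := hu.norm_map.trans <| hw.compContinuousLinearMap_linearIsometry.norm_map.symm.trans
    hw.norm_map

end NormedSpace

section InnerProductSpace

variable {𝕜 ι E F : Type*} [RCLike 𝕜] [Fintype ι]
  [NormedAddCommGroup E] [InnerProductSpace 𝕜 E] [SeminormedAddCommGroup F] [NormedSpace 𝕜 F]
  {L : ContinuousMultilinearMap 𝕜 (fun _ : ι => E) F} {v : ι → E}

theorem mul_norm_add_sq_le_norm_map_update_update [DecidableEq ι]
    (hsym : ∀ (σ : Equiv.Perm ι) (v : ι → E), L (v ∘ σ) = L v)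
    (hv : IsNormingTuple L v) {i j : ι} (hij : i ≠ j) :
    ‖L‖ * ‖v i + v j‖ ^ 2 ≤
      ‖L (Function.update (Function.update v i (v i + v j)) j (v i + v j))‖ := by
  set p := v i + v j
  set m := v i - v j
  have hpar : ‖p‖ ^ 2 + ‖m‖ ^ 2 = 4 := by
    rw [parallelogram_law_with_norm 𝕜, hv.norm_eq_one, hv.norm_eq_one]
    norm_num
  have hpol : L (Function.update (Function.update v i p) j p) -
      L (Function.update (Function.update v i m) j m) = (4 : 𝕜) • L v := by
    refine (map_update_update_add_sub_map_update_update_sub (f := L.toMultilinearMap) hsym hij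
      v (v i) (v j)).trans ?_
    rw [Function.update_eq_self, Function.update_eq_self, ofNat_smul_eq_nsmul 𝕜]
    rfl
  have hm := norm_map_update_update_le L (fun k => (hv.norm_eq_one k).le) hij m m
  have htri := norm_sub_le (L (Function.update (Function.update v i p) j p))
    (L (Function.update (Function.update v i m) j m))
  rw [hpol, norm_smul, hv.norm_map, RCLike.norm_ofNat, ← hpar] at htri
  linarith

theorem update_update_normalize_add [DecidableEq ι]
    (hsym : ∀ (σ : Equiv.Perm ι) (v : ι → E), L (v ∘ σ) = L v)
    (hv : IsNormingTuple L v) {i j : ι} (hij : i ≠ j) (hp : v i + v j ≠ 0) :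
    IsNormingTuple L
      (Function.update (Function.update v i ((‖v i + v j‖ : 𝕜)⁻¹ • (v i + v j)))
        j ((‖v i + v j‖ : 𝕜)⁻¹ • (v i + v j))) := by
  set w := (‖v i + v j‖ : 𝕜)⁻¹ • (v i + v j) with hw
  have hw_norm : ‖w‖ = 1 := norm_smul_inv_norm hp
  have h_unit := forall_norm_update_eq_one
    (forall_norm_update_eq_one hv.norm_eq_one i hw_norm) j hw_norm
  refine ⟨h_unit, le_antisymm ?_ ?_⟩
  · simpa [hw_norm] using norm_map_update_update_le L (fun k => (hv.norm_eq_one k).le) hij w w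
  · have hp_pos : 0 < ‖v i + v j‖ := norm_pos_iff.mpr hp
    have h := hv.mul_norm_add_sq_le_norm_map_update_update hsym hij
    rw [hw, L.map_update_smul, Function.update_comm hij, L.map_update_smul,
      Function.update_comm hij.symm, norm_smul, norm_smul, norm_inv, RCLike.norm_coe_norm]
    field_simp
    exact h

theorem re_inner_sum_pos_of_isMaxOn (hv : IsNormingTuple L v)
    (hmax : IsMaxOn (fun u : ι → E => ‖∑ k, u k‖) {u | IsNormingTuple L u} v) (i : ι) :
    0 < RCLike.re (inner 𝕜 (∑ k, v k) (v i)) := by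
  classical
  by_contra! hle
  have hne : v i ≠ 0 := norm_ne_zero_iff.mp (by rw [hv.norm_eq_one]; exact one_ne_zero)
  have hflip : ‖∑ k, v k + (-v i - v i)‖ ≤ ‖∑ k, v k‖ := by
    simpa only [Set.mem_ofPred_eq, sum_update_eq_sum_add_sub] using hmax (hv.update_neg i)
  refine hflip.not_gt (norm_lt_norm_add_of_re_inner_nonneg (𝕜 := 𝕜) ?_ ?_)
  · rw [inner_sub_right, inner_neg_right, map_sub, map_neg]
    linarith
  · rw [← neg_add', neg_ne_zero, ← two_smul 𝕜]
    exact smul_ne_zero two_ne_zero hne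

theorem two_le_norm_add_of_isMaxOn
    (hsym : ∀ (σ : Equiv.Perm ι) (v : ι → E), L (v ∘ σ) = L v) (hv : IsNormingTuple L v)
    (hmax : IsMaxOn (fun u : ι → E => ‖∑ k, u k‖) {u | IsNormingTuple L u} v)
    {i j : ι} (hij : i ≠ j) : 2 ≤ ‖v i + v j‖ := by
  classical
  by_contra! hlt
  set p := v i + v j with hp
  have hinner : 0 < RCLike.re (inner 𝕜 (∑ k, v k) p) := by
    rw [hp, inner_add_right, map_add]
    exact add_pos (hv.re_inner_sum_pos_of_isMaxOn hmax i) (hv.re_inner_sum_pos_of_isMaxOn hmax j)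
  have hp_ne : p ≠ 0 := by
    intro h0
    simp [h0] at hinner
  set w := (‖p‖ : 𝕜)⁻¹ • p with hw
  have hc : 0 < 2 * ‖p‖⁻¹ - 1 := by
    have hp_pos : 0 < ‖p‖ := norm_pos_iff.mpr hp_ne
    field_simp
    linarith
  have hsum : ∑ k, Function.update (Function.update v i w) j w k =
      ∑ k, v k + ((2 * ‖p‖⁻¹ - 1 : ℝ) : 𝕜) • p := by
    rw [sum_update_eq_sum_add_sub, sum_update_eq_sum_add_sub, Function.update_of_ne hij.symm, hw]
    push_cast
    rw [sub_smul, mul_smul, two_smul, one_smul, hp]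
    abel
  have hle : ‖∑ k, v k + ((2 * ‖p‖⁻¹ - 1 : ℝ) : 𝕜) • p‖ ≤ ‖∑ k, v k‖ :=
    hsum ▸ hmax (hv.update_update_normalize_add hsym hij hp_ne)
  refine hle.not_gt (norm_lt_norm_add_of_re_inner_nonneg (𝕜 := 𝕜) ?_ ?_)
  · rw [inner_smul_right, RCLike.re_ofReal_mul]
    exact (mul_pos hc hinner).le
  · exact smul_ne_zero (RCLike.ofReal_ne_zero.mpr hc.ne') hp_ne

theorem apply_eq_of_isMaxOn (hsym : ∀ (σ : Equiv.Perm ι) (v : ι → E), L (v ∘ σ) = L v)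
    (hv : IsNormingTuple L v)
    (hmax : IsMaxOn (fun u : ι → E => ‖∑ k, u k‖) {u | IsNormingTuple L u} v) (i j : ι) :
    v i = v j := by
  rcases eq_or_ne i j with rfl | hij
  · rfl
  · exact eq_of_norm_le_one_of_two_le_norm_add 𝕜 (hv.norm_eq_one i).le (hv.norm_eq_one j).le
      (hv.two_le_norm_add_of_isMaxOn hsym hmax hij)

end InnerProductSpace

end IsNormingTuple

theorem isCompact_setOf_isNormingTuple {𝕜 ι E F : Type*} [NontriviallyNormedField 𝕜] [Fintype ι]
    [SeminormedAddCommGroup E] [NormedSpace 𝕜 E] [ProperSpace E]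
    [SeminormedAddCommGroup F] [NormedSpace 𝕜 F]
    (L : ContinuousMultilinearMap 𝕜 (fun _ : ι => E) F) :
    IsCompact {v | IsNormingTuple L v} := by
  have hset : {v | IsNormingTuple L v} =
      (Set.univ.pi fun _ => sphere (0 : E) 1) ∩ {v | ‖L v‖ = ‖L‖} := by
    ext v
    simp only [Set.mem_inter_iff, Set.mem_univ_pi, mem_sphere_zero_iff_norm, Set.mem_ofPred_eq]
    exact ⟨fun hv => ⟨hv.norm_eq_one, hv.norm_map⟩, fun ⟨h_unit, hL⟩ => ⟨h_unit, hL⟩⟩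
  rw [hset]
  exact (isCompact_univ_pi fun _ => isCompact_sphere 0 1).inter_right
    (isClosed_eq L.cont.norm continuous_const)

section Symmetric

variable {𝕜 ι E F : Type*} [RCLike 𝕜] [Fintype ι] [NormedAddCommGroup E] [InnerProductSpace 𝕜 E]
  [SeminormedAddCommGroup F] [NormedSpace 𝕜 F]
  {L : ContinuousMultilinearMap 𝕜 (fun _ : ι => E) F}

theorem exists_isNormingTuple_apply_eq_of_properSpace [ProperSpace E]
    (hsym : ∀ (σ : Equiv.Perm ι) (v : ι → E), L (v ∘ σ) = L v)
    (hattain : ∃ x, IsNormingTuple L x) :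
    ∃ v, IsNormingTuple L v ∧ ∀ i j, v i = v j := by
  obtain ⟨v, hv, hmax⟩ := (isCompact_setOf_isNormingTuple L).exists_isMaxOn hattain
    (f := fun u => ‖∑ k, u k‖) (by fun_prop)
  exact ⟨v, hv, hv.apply_eq_of_isMaxOn hsym hmax⟩

theorem exists_isNormingTuple_apply_eq
    (hsym : ∀ (σ : Equiv.Perm ι) (v : ι → E), L (v ∘ σ) = L v)
    (hattain : ∃ x, IsNormingTuple L x) :
    ∃ v, IsNormingTuple L v ∧ ∀ i j, v i = v j := by
  obtain ⟨x, hx⟩ := hattain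
  let V : Submodule 𝕜 E := Submodule.span 𝕜 (Set.range x)
  have : FiniteDimensional 𝕜 V := FiniteDimensional.span_of_finite 𝕜 (Set.finite_range x)
  have : ProperSpace V := FiniteDimensional.proper_rclike 𝕜 V
  let y : ι → V := fun i => ⟨x i, Submodule.subset_span (Set.mem_range_self i)⟩
  have hy : IsNormingTuple L (V.subtypeₗᵢ ∘ y) := hx
  obtain ⟨u, hu, hconst⟩ := exists_isNormingTuple_apply_eq_of_properSpace
    (fun σ w => hsym σ (V.subtypeₗᵢ ∘ w)) ⟨y, hy.compContinuousLinearMap_linearIsometry⟩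
  exact ⟨V.subtypeₗᵢ ∘ u, hy.comp_linearIsometry hu, fun i j => congrArg V.subtypeₗᵢ (hconst i j)⟩

theorem isGreatest_norm_map_const_image_closedBall
    (hsym : ∀ (σ : Equiv.Perm ι) (v : ι → E), L (v ∘ σ) = L v)
    (hattain : ∃ x, IsNormingTuple L x) :
    IsGreatest ((fun u => ‖L (fun _ => u)‖) '' closedBall (0 : E) 1) ‖L‖ := by
  obtain ⟨v, hv, hconst⟩ := exists_isNormingTuple_apply_eq hsym hattain
  constructor
  · obtain ⟨e, he, rfl⟩ : ∃ e : E, ‖e‖ ≤ 1 ∧ v = fun _ => e := by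
      rcases isEmpty_or_nonempty ι with _ | ⟨⟨i⟩⟩
      · exact ⟨0, by simp, Subsingleton.elim _ _⟩
      · exact ⟨v i, (hv.norm_eq_one i).le, funext fun k => hconst k i⟩
    exact ⟨e, mem_closedBall_zero_iff.mpr he, hv.norm_map⟩
  · rintro _ ⟨u, hu, rfl⟩
    exact L.unit_le_opNorm
      ((pi_norm_const_le u).trans (mem_closedBall_zero_iff.mp hu))

end Symmetric

theorem norm_attaining_symmetric_multilinear_hilbert_general
    {𝕜 ι E F : Type*} [RCLike 𝕜] [Fintype ι] [NormedAddCommGroup E] [InnerProductSpace 𝕜 E]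
    [SeminormedAddCommGroup F] [NormedSpace 𝕜 F]
    (L : ContinuousMultilinearMap 𝕜 (fun _ : ι => E) F)
    (hsym : ∀ (σ : Equiv.Perm ι) (v : ι → E), L (v ∘ σ) = L v)
    (hattain : ∃ x : ι → E, (∀ i, ‖x i‖ = 1) ∧ ‖L x‖ = ‖L‖) :
    (∃ x₀ : E, ‖x₀‖ ≤ 1 ∧
        ‖L (fun _ => x₀)‖
          = sSup ((fun u => ‖L (fun _ => u)‖) '' closedBall (0 : E) 1)) ∧
      ‖L‖ = sSup ((fun u => ‖L (fun _ => u)‖) '' closedBall (0 : E) 1) := by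
  obtain ⟨x, hx, hLx⟩ := hattain
  have hgreatest := isGreatest_norm_map_const_image_closedBall hsym ⟨x, hx, hLx⟩
  obtain ⟨x₀, hx₀, hLx₀⟩ := hgreatest.1
  exact ⟨⟨x₀, mem_closedBall_zero_iff.mp hx₀, hLx₀.trans hgreatest.csSup_eq.symm⟩,
    hgreatest.csSup_eq.symm⟩

/-- If a continuous symmetric `n`-linear form (`n ≥ 2`) on a real or complex Hilbert
space attains its norm at unit vectors, then the associated `n`-homogeneous polynomial
`L̂` also attains its norm on the closed unit ball, and `‖L‖ = ‖L̂‖`. -/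
theorem norm_attaining_symmetric_multilinear_hilbert
    {𝕜 : Type*} [RCLike 𝕜] {H : Type*} [NormedAddCommGroup H]
    [InnerProductSpace 𝕜 H] [CompleteSpace H]
    (n : ℕ) (hn : 2 ≤ n)
    (L : ContinuousMultilinearMap 𝕜 (fun _ : Fin n => H) 𝕜)
    (hsym : ∀ (σ : Equiv.Perm (Fin n)) (v : Fin n → H), L (v ∘ σ) = L v)
    (hattain : ∃ x : Fin n → H, (∀ i, ‖x i‖ = 1) ∧ ‖L x‖ = ‖L‖) :
    (∃ x₀ : H, ‖x₀‖ ≤ 1 ∧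
        ‖L (fun _ => x₀)‖
          = sSup ((fun u => ‖L (fun _ => u)‖) '' closedBall (0 : H) 1)) ∧
      ‖L‖ = sSup ((fun u => ‖L (fun _ => u)‖) '' closedBall (0 : H) 1) :=
  norm_attaining_symmetric_multilinear_hilbert_general L hsym hattain
end

section
/- Let H be a real or complex Hilbert space and let P be a continuous polynomial of degree n on H. Then for every unit vector x ∈ H, n²|P(x)|² − |DP(x)x|² + ‖DP(x)‖² ≤ n²‖P‖². In particular, if P = L̂ is a continuous n-homogeneous polynomial (so DP(x)x = nP(x)), then ‖DL̂(x)‖ ≤ n‖L̂‖ for every ‖x‖ ≤ 1; equivalently, ‖L‖ = ‖L̂‖ for every continuous symmetric n-linear form L on H. -/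
open Metric

/-!
Let `x` and `y` be orthogonal unit vectors. On the circle `cos θ • x + sin θ • y`, which stays in
the unit sphere, a real polynomial `P` of degree `n` is a trigonometric polynomial `g` of degree
`n`, and `g 0 = P x`, `g' 0 = DP(x) y`. So the Bernstein–Szegő inequality
`n² g² + g'² ≤ n² max |g|²` controls `DP(x)` on the complement of `x`; over `ℂ`, unimodular factors
on `P` and on `y` make `P x` and `DP(x) y` real. By Pythagoras the full norm only adds the radial
part `|DP(x) x|²`.

Write `Q(e^{iθ}) = e^{inθ} g(θ)` with `Q` of degree `N = 2n`. The Bernstein–Szegő inequality is then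
Malik's inequality `|z Q'| + |N Q - z Q'| ≤ N max |Q|` on the unit circle, because for real `g` both
summands equal `√(n² g² + g'²)`. In turn Malik's inequality rests on the strict inequality
`|z F'| < |N F - z F'|` for `F` without roots in the closed disc, that is `Re (z F' / F) < N / 2`,
where each root `t` contributes `Re (z / (z - t)) < 1 / 2`.

For homogeneous `P` the radial term cancels the first one by Euler's identity `DP(x) x = n P(x)`.
If `L` is symmetric then `DP(x) y = n L(y, x, …, x)`, so the bound on `DP` passes from the diagonal
of `L` to the diagonal of `L(y, ·)`, and induction on `n` reaches all of `L`.
-/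

lemma norm_le_of_forall_sphere_norm_le {F : Type*} [NormedAddCommGroup F] [NormedSpace ℂ F]
    {f : ℂ → F} {c : ℂ} {r M : ℝ} (hf : DiffContOnCl ℂ f (ball c r))
    (hM : ∀ t ∈ sphere c r, ‖f t‖ ≤ M) {t : ℂ} (ht : t ∈ closedBall c r) : ‖f t‖ ≤ M := by
  obtain ht | ht := (mem_closedBall.1 ht).eq_or_lt
  · exact hM t ht
  · exact Complex.norm_le_of_forall_mem_frontier_norm_le isBounded_ball hf
      (fun w hw => hM w (frontier_ball_subset_sphere hw)) (subset_closure ht)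

section Polynomial

open Polynomial

lemma re_div_sub_lt_half {z t : ℂ} (hzt : ‖z‖ < ‖t‖) : (z / (z - t)).re < 1 / 2 := by
  have hne : z - t ≠ 0 := sub_ne_zero.2 fun h => hzt.ne (congrArg norm h)
  have hpos : 0 < Complex.normSq (z - t) := Complex.normSq_pos.2 hne
  have hsq : Complex.normSq z < Complex.normSq t := by
    simpa only [Complex.normSq_eq_norm_sq] using pow_lt_pow_left₀ hzt (norm_nonneg z) two_ne_zero
  rw [Complex.div_re, ← add_div, div_lt_iff₀ hpos]
  simp only [Complex.normSq_apply, Complex.sub_re, Complex.sub_im] at hsq ⊢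
  linarith

lemma re_mul_eval_derivative_div_eval_lt {F : ℂ[X]} {N : ℕ} (hN : 0 < N) (hF : F.natDegree ≤ N)
    {z : ℂ} (hz : ∀ t, F.IsRoot t → ‖z‖ < ‖t‖) :
    (z * F.derivative.eval z / F.eval z).re < N / 2 := by
  have hFz : F.eval z ≠ 0 := fun h => (hz z h).false
  rw [mul_div_assoc, (IsAlgClosed.splits F).eval_derivative_div_eval_of_ne_zero hFz,
    ← Multiset.sum_map_mul_left, ← Complex.reCLM_apply, map_multiset_sum, Multiset.map_map]
  have hroot : ∀ t ∈ F.roots, (z * (1 / (z - t))).re < 1 / 2 := fun t ht => by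
    rw [mul_one_div]
    exact re_div_sub_lt_half (hz t (isRoot_of_mem_roots ht))
  obtain hempty | hne := eq_or_ne F.roots 0
  · simpa [hempty] using hN
  · calc (F.roots.map fun t => (z * (1 / (z - t))).re).sum
        < (F.roots.map fun _ => (1 / 2 : ℝ)).sum := Multiset.sum_lt_sum_of_nonempty hne hroot
      _ = F.roots.card / 2 := by simp [div_eq_mul_inv]
      _ ≤ N / 2 := by gcongr; exact F.card_roots'.trans hF

lemma norm_lt_norm_ofReal_sub {a : ℂ} {r : ℝ} (hr : 0 < r) (ha : a.re < r / 2) :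
    ‖a‖ < ‖r - a‖ := by
  rw [← sq_lt_sq₀ (norm_nonneg _) (norm_nonneg _), ← Complex.normSq_eq_norm_sq,
    ← Complex.normSq_eq_norm_sq, Complex.normSq_sub, Complex.normSq_ofReal, Complex.re_ofReal_mul,
    Complex.conj_re]
  linarith [mul_lt_mul_of_pos_left ha hr]

theorem norm_mul_eval_derivative_lt {F : ℂ[X]} {N : ℕ} (hN : 0 < N) (hF : F.natDegree ≤ N) {z : ℂ}
    (hz : ∀ t, F.IsRoot t → ‖z‖ < ‖t‖) :
    ‖z * F.derivative.eval z‖ < ‖N * F.eval z - z * F.derivative.eval z‖ := by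
  have hFz : F.eval z ≠ 0 := fun h => (hz z h).false
  have hre := re_mul_eval_derivative_div_eval_lt hN hF hz
  have h := norm_lt_norm_ofReal_sub (Nat.cast_pos.2 hN) hre
  rw [← mul_lt_mul_iff_left₀ (norm_pos_iff.2 hFz), ← norm_mul, ← norm_mul] at h
  simpa [sub_mul, hFz] using h

theorem norm_mul_eval_derivative_add_norm_sub_le {Q : ℂ[X]} {N : ℕ} (hN : Q.natDegree ≤ N)
    {z : ℂ} {M : ℝ} (hM : ∀ t, ‖t‖ = ‖z‖ → ‖Q.eval t‖ ≤ M) :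
    ‖z * Q.derivative.eval z‖ + ‖N * Q.eval z - z * Q.derivative.eval z‖ ≤ N * M := by
  obtain rfl | hNpos := N.eq_zero_or_pos
  · simp [derivative_of_natDegree_zero (Nat.le_zero.1 hN)]
  by_contra! hlt
  have hN0 : (N : ℂ) ≠ 0 := Nat.cast_ne_zero.2 hNpos.ne'
  set A := N * Q.eval z - z * Q.derivative.eval z with hA
  set B := z * Q.derivative.eval z with hB
  obtain ⟨e, he, heA⟩ : ∃ e : ℂ, ‖e‖ = 1 ∧ e * ‖A‖ = A := RCLike.exists_norm_mul_eq_self A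
  -- `N * c` lies beyond `A` on its ray, at distance `‖B‖`, so `‖N (Q - c) - z Q'‖ = ‖z Q'‖`,
  -- although `M < ‖c‖` keeps the roots of `Q - c` out of the disc.
  set c : ℂ := e * ((‖A‖ + ‖B‖) / N : ℝ) with hc
  have hMc : M < ‖c‖ := by
    rw [hc, norm_mul, he, one_mul, Complex.norm_real, Real.norm_of_nonneg (by positivity),
      lt_div_iff₀ (by positivity)]
    linarith
  have hroot : ∀ t, (Q - C c).IsRoot t → ‖z‖ < ‖t‖ := by
    intro t ht
    by_contra! htz
    have hQt : Q.eval t = c := by simpa [sub_eq_zero] using ht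
    exact hMc.not_ge <| hQt ▸ norm_le_of_forall_sphere_norm_le Q.differentiable.diffContOnCl
      (fun s hs => hM s (mem_sphere_zero_iff_norm.1 hs)) (mem_closedBall_zero_iff.2 htz)
  have hlag := norm_mul_eval_derivative_lt hNpos ((natDegree_sub_C (a := c)).trans_le hN) hroot
  have hNc : N * c = A + e * ‖B‖ := by
    conv_rhs => rw [← heA]
    rw [hc]
    push_cast
    field_simp
  have hshift : N * (Q - C c).eval z - z * (Q - C c).derivative.eval z = -(e * ‖B‖) := by
    simp only [eval_sub, eval_C, derivative_sub, derivative_C, sub_zero]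
    linear_combination -hA - hNc
  rw [hshift] at hlag
  simp [he, ← hB] at hlag

/-- Real trigonometric polynomials of degree at most `n`, through the polynomial `Q` with
`Q(e^{iθ}) = e^{inθ} g(θ)`: multiplying `g` by `e^{inθ}` clears the negative frequencies. -/
def IsTrigPolynomial (n : ℕ) (g : ℝ → ℝ) : Prop :=
  ∃ Q : ℂ[X], Q.natDegree ≤ 2 * n ∧
    ∀ θ : ℝ, Q.eval (Complex.exp (θ * Complex.I)) = Complex.exp (θ * Complex.I) ^ n * g θ

namespace IsTrigPolynomial

protected lemma const (c : ℝ) : IsTrigPolynomial 0 fun _ => c := ⟨C (c : ℂ), by simp, by simp⟩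

protected lemma cos : IsTrigPolynomial 1 Real.cos := by
  refine ⟨C (1 / 2) * (X ^ 2 + 1), by compute_degree, fun θ => ?_⟩
  simp only [eval_mul, eval_C, eval_add, eval_pow, eval_X, eval_one, pow_one, Complex.ofReal_cos,
    Complex.cos, neg_mul, Complex.exp_neg]
  field

protected lemma sin : IsTrigPolynomial 1 Real.sin := by
  refine ⟨C (Complex.I / 2) * (1 - X ^ 2), by compute_degree, fun θ => ?_⟩
  simp only [eval_mul, eval_C, eval_sub, eval_pow, eval_X, eval_one, pow_one, Complex.ofReal_sin,
    Complex.sin, neg_mul, Complex.exp_neg]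
  field

protected lemma mono {m n : ℕ} {g : ℝ → ℝ} (hmn : m ≤ n) (hg : IsTrigPolynomial m g) :
    IsTrigPolynomial n g := by
  obtain ⟨Q, hQ, hQg⟩ := hg
  refine ⟨X ^ (n - m) * Q, ?_, fun θ => ?_⟩
  · have hdeg := natDegree_mul_le_of_le (natDegree_X_pow_le (R := ℂ) (n - m)) hQ
    lia
  · rw [eval_mul, eval_X_pow, hQg, ← mul_assoc, ← pow_add, Nat.sub_add_cancel hmn]

protected lemma mul {m n : ℕ} {f g : ℝ → ℝ} (hf : IsTrigPolynomial m f)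
    (hg : IsTrigPolynomial n g) : IsTrigPolynomial (m + n) fun θ => f θ * g θ := by
  obtain ⟨Q, hQ, hQf⟩ := hf
  obtain ⟨R, hR, hRg⟩ := hg
  refine ⟨Q * R, (natDegree_mul_le_of_le hQ hR).trans_eq (mul_add 2 m n).symm, fun θ => ?_⟩
  rw [eval_mul, hQf, hRg, Complex.ofReal_mul]
  ring

protected lemma sum {n : ℕ} {ι : Type*} (s : Finset ι) {g : ι → ℝ → ℝ}
    (hg : ∀ i ∈ s, IsTrigPolynomial n (g i)) : IsTrigPolynomial n fun θ => ∑ i ∈ s, g i θ := by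
  choose! Q hQ hQg using hg
  refine ⟨∑ i ∈ s, Q i, natDegree_sum_le_of_forall_le _ _ hQ, fun θ => ?_⟩
  rw [eval_finsetSum, Complex.ofReal_sum, Finset.mul_sum]
  exact Finset.sum_congr rfl fun i hi => hQg i hi θ

protected lemma prod {ι : Type*} (s : Finset ι) {d : ι → ℕ} {g : ι → ℝ → ℝ}
    (hg : ∀ i ∈ s, IsTrigPolynomial (d i) (g i)) :
    IsTrigPolynomial (∑ i ∈ s, d i) fun θ => ∏ i ∈ s, g i θ := by
  choose! Q hQ hQg using hg
  refine ⟨∏ i ∈ s, Q i, ?_, fun θ => ?_⟩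
  · rw [Finset.mul_sum]
    exact (natDegree_prod_le s Q).trans (Finset.sum_le_sum hQ)
  · rw [eval_prod, Complex.ofReal_prod, ← Finset.prod_pow_eq_pow_sum, ← Finset.prod_mul_distrib]
    exact Finset.prod_congr rfl fun i hi => hQg i hi θ

lemma mul_eval_derivative_eq {Q : ℂ[X]} {n : ℕ} {g : ℝ → ℝ}
    (hQg : ∀ θ : ℝ, Q.eval (Complex.exp (θ * Complex.I)) = Complex.exp (θ * Complex.I) ^ n * g θ)
    {θ g' : ℝ} (hg' : HasDerivAt g g' θ) :
    Complex.exp (θ * Complex.I) * Q.derivative.eval (Complex.exp (θ * Complex.I)) =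
      Complex.exp (θ * Complex.I) ^ n * (n * g θ - g' * Complex.I) := by
  set z := Complex.exp (θ * Complex.I) with hz
  have hexp : HasDerivAt (fun φ : ℝ => Complex.exp (φ * Complex.I)) (z * Complex.I) θ := by
    simpa using ((Complex.ofRealCLM.hasDerivAt (x := θ)).mul_const Complex.I).cexp
  have hpow : HasDerivAt (fun φ : ℝ => Complex.exp (φ * Complex.I) ^ n)
      (n * z ^ n * Complex.I) θ :=
    (hexp.fun_pow n).congr_deriv (by cases n <;> simp [pow_succ, mul_assoc, ← hz])
  have hcomp : HasDerivAt (fun φ : ℝ => Q.eval (Complex.exp (φ * Complex.I)))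
      (Q.derivative.eval z * (z * Complex.I)) θ :=
    (Q.hasDerivAt z).comp_of_eq θ hexp rfl
  simp only [hQg] at hcomp
  have heq := hcomp.unique (hpow.fun_mul hg'.ofReal_comp)
  linear_combination (-Complex.I) * heq +
    (z * Q.derivative.eval z - n * z ^ n * g θ) * Complex.I_sq

theorem bernstein_szego {n : ℕ} {g : ℝ → ℝ} (hg : IsTrigPolynomial n g) {M : ℝ}
    (hM : ∀ θ, |g θ| ≤ M) {θ g' : ℝ} (hg' : HasDerivAt g g' θ) :
    (n : ℝ) ^ 2 * g θ ^ 2 + g' ^ 2 ≤ (n : ℝ) ^ 2 * M ^ 2 := by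
  obtain ⟨Q, hQ, hQg⟩ := hg
  set z := Complex.exp (θ * Complex.I)
  have hz1 : ‖z‖ = 1 := Complex.norm_exp_ofReal_mul_I θ
  have hQM : ∀ t, ‖t‖ = ‖z‖ → ‖Q.eval t‖ ≤ M := fun t ht => by
    rw [hz1, Complex.norm_eq_one_iff] at ht
    obtain ⟨φ, rfl⟩ := ht
    simpa [hQg, Complex.norm_exp_ofReal_mul_I] using hM φ
  have hderiv : z * Q.derivative.eval z = z ^ n * (n * g θ - g' * Complex.I) :=
    mul_eval_derivative_eq hQg hg'
  have hconj : ‖(n * g θ + g' * Complex.I : ℂ)‖ = ‖(n * g θ - g' * Complex.I : ℂ)‖ := by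
    rw [← Complex.norm_conj]
    simp [sub_eq_add_neg]
  have hreflect : (2 * n : ℕ) * Q.eval z - z * Q.derivative.eval z
      = z ^ n * (n * g θ + g' * Complex.I) := by
    rw [hderiv, hQg]
    push_cast
    ring
  have hsum := norm_mul_eval_derivative_add_norm_sub_le hQ hQM
  rw [hreflect, hderiv, norm_mul, norm_mul, norm_pow, hz1, one_pow, one_mul, one_mul,
    ← hconj] at hsum
  have hle : ‖(n * g θ + g' * Complex.I : ℂ)‖ ≤ n * M := by
    push_cast at hsum
    linarith
  calc (n : ℝ) ^ 2 * g θ ^ 2 + g' ^ 2 = ‖((n * g θ : ℝ) + g' * Complex.I : ℂ)‖ ^ 2 := by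
        rw [Complex.norm_add_mul_I, Real.sq_sqrt (by positivity), mul_pow]
    _ ≤ (n * M) ^ 2 := by gcongr; exact_mod_cast hle
    _ = n ^ 2 * M ^ 2 := mul_pow ..

end IsTrigPolynomial

end Polynomial

/-- The norm of a polynomial, `‖P‖ = sup_{‖u‖ ≤ 1} ‖P u‖`. It is `0`
by convention if `P` is unbounded on the unit ball, which a continuous polynomial never is. -/
noncomputable def unitBallNorm {E F : Type*} [SeminormedAddCommGroup E] [Norm F] (P : E → F) : ℝ :=
  sSup ((fun u => ‖P u‖) '' closedBall (0 : E) 1)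

/-- Continuous polynomials of degree at most `n` between normed spaces: sums of the diagonal
restrictions of continuous `j`-linear maps for `j ≤ n`. The maps need not be symmetric, since
in characteristic zero symmetrizing them does not change the diagonal. -/
def IsContinuousPolynomial (𝕜 : Type*) [NontriviallyNormedField 𝕜] {E F : Type*}
    [NormedAddCommGroup E] [NormedSpace 𝕜 E] [NormedAddCommGroup F] [NormedSpace 𝕜 F]
    (n : ℕ) (P : E → F) : Prop :=
  ∃ L : (j : Fin (n + 1)) → ContinuousMultilinearMap 𝕜 (fun _ : Fin (j : ℕ) => E) F,
    ∀ x, P x = ∑ j, L j fun _ => x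

namespace IsContinuousPolynomial

section Normed

variable {𝕜 : Type*} [NontriviallyNormedField 𝕜] {E F G : Type*}
  [NormedAddCommGroup E] [NormedSpace 𝕜 E] [NormedAddCommGroup F] [NormedSpace 𝕜 F]
  [NormedAddCommGroup G] [NormedSpace 𝕜 G] {n : ℕ} {P : E → F}

lemma of_diag (L : ContinuousMultilinearMap 𝕜 (fun _ : Fin n => E) F) :
    IsContinuousPolynomial 𝕜 n fun x => L fun _ => x :=
  ⟨Fin.lastCases L fun _ => 0, fun x => by simp [Fin.sum_univ_castSucc]⟩

lemma clm_comp (f : F →L[𝕜] G) (hP : IsContinuousPolynomial 𝕜 n P) :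
    IsContinuousPolynomial 𝕜 n fun x => f (P x) := by
  obtain ⟨L, hL⟩ := hP
  exact ⟨fun j => f.compContinuousMultilinearMap (L j), fun x => by simp [hL]⟩

lemma restrictScalars {𝕂 : Type*} [NontriviallyNormedField 𝕂] [NormedAlgebra 𝕂 𝕜]
    [NormedSpace 𝕂 E] [IsScalarTower 𝕂 𝕜 E] [NormedSpace 𝕂 F] [IsScalarTower 𝕂 𝕜 F]
    (hP : IsContinuousPolynomial 𝕜 n P) : IsContinuousPolynomial 𝕂 n P := by
  obtain ⟨L, hL⟩ := hP
  exact ⟨fun j => (L j).restrictScalars 𝕂, hL⟩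

lemma differentiable (hP : IsContinuousPolynomial 𝕜 n P) : Differentiable 𝕜 P := by
  obtain ⟨L, hL⟩ := hP
  rw [funext hL]
  exact .fun_sum fun j _ => (L j).contDiff.differentiable_one.comp
    (differentiable_pi.2 fun _ => differentiable_id)

lemma norm_le_unitBallNorm (hP : IsContinuousPolynomial 𝕜 n P) {u : E} (hu : ‖u‖ ≤ 1) :
    ‖P u‖ ≤ unitBallNorm P := by
  obtain ⟨L, hL⟩ := hP
  refine le_csSup ⟨∑ j, ‖L j‖, ?_⟩ ⟨u, mem_closedBall_zero_iff.2 hu, rfl⟩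
  rintro _ ⟨v, hv, rfl⟩
  simp only [hL]
  refine (norm_sum_le _ _).trans (Finset.sum_le_sum fun j _ => ?_)
  exact (L j).unit_le_opNorm ((pi_norm_const_le v).trans (mem_closedBall_zero_iff.1 hv))

end Normed

section Real

variable {E : Type*} [NormedAddCommGroup E] [NormedSpace ℝ E] {n : ℕ} {P : E → ℝ}

lemma isTrigPolynomial_circle (hP : IsContinuousPolynomial ℝ n P) (x y : E) :
    IsTrigPolynomial n fun θ => P (Real.cos θ • x + Real.sin θ • y) := by
  classical
  obtain ⟨L, hL⟩ := hP
  have hexpand (j : Fin (n + 1)) (θ : ℝ) : L j (fun _ => Real.cos θ • x + Real.sin θ • y) =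
      ∑ s : Finset (Fin j), (∏ i, if i ∈ s then Real.cos θ else Real.sin θ) *
        L j (s.piecewise (fun _ => x) fun _ => y) := by
    refine ((L j).map_add_univ (fun _ => Real.cos θ • x) fun _ => Real.sin θ • y).trans ?_
    refine Finset.sum_congr rfl fun s _ => ?_
    rw [← smul_eq_mul, ← (L j).map_smul_univ]
    congr 1 with i
    by_cases hi : i ∈ s <;> simp [hi]
  simp only [hL, hexpand]
  refine .sum _ fun j _ => .sum _ fun s _ => ?_
  have hfactor (i : Fin j) :
      IsTrigPolynomial 1 fun θ => if i ∈ s then Real.cos θ else Real.sin θ := by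
    split_ifs
    exacts [.cos, .sin]
  have hprod := IsTrigPolynomial.prod Finset.univ fun i _ => hfactor i
  exact (hprod.mul (.const _)).mono (by simpa using j.is_le)

theorem sq_add_sq_fderiv_le_of_circle (hP : IsContinuousPolynomial ℝ n P) {x y : E} {M : ℝ}
    (hM : ∀ θ : ℝ, |P (Real.cos θ • x + Real.sin θ • y)| ≤ M) :
    (n : ℝ) ^ 2 * P x ^ 2 + fderiv ℝ P x y ^ 2 ≤ (n : ℝ) ^ 2 * M ^ 2 := by
  have hcircle : HasDerivAt (fun θ : ℝ => Real.cos θ • x + Real.sin θ • y) y 0 :=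
    (((Real.hasDerivAt_cos 0).smul_const x).fun_add
      ((Real.hasDerivAt_sin 0).smul_const y)).congr_deriv (by simp)
  have hg' : HasDerivAt (fun θ : ℝ => P (Real.cos θ • x + Real.sin θ • y)) (fderiv ℝ P x y) 0 :=
    (hP.differentiable x).hasFDerivAt.comp_hasDerivAt_of_eq 0 hcircle (by simp)
  simpa using (hP.isTrigPolynomial_circle x y).bernstein_szego hM hg'

end Real

end IsContinuousPolynomial

lemma norm_cos_smul_add_sin_smul {E : Type*} [NormedAddCommGroup E] [InnerProductSpace ℝ E]
    {x y : E} (hx : ‖x‖ = 1) (hy : ‖y‖ = 1) (hxy : inner ℝ x y = 0) (θ : ℝ) :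
    ‖Real.cos θ • x + Real.sin θ • y‖ = 1 := by
  have hortho : inner ℝ (Real.cos θ • x) (Real.sin θ • y) = 0 := by
    rw [real_inner_smul_left, real_inner_smul_right, hxy, mul_zero, mul_zero]
  rw [← pow_eq_one_iff_of_nonneg (norm_nonneg _) two_ne_zero, sq,
    norm_add_sq_eq_norm_sq_add_norm_sq_of_inner_eq_zero _ _ hortho, norm_smul, norm_smul, hx, hy,
    mul_one, mul_one, ← sq, ← sq, Real.norm_eq_abs, Real.norm_eq_abs, sq_abs, sq_abs,
    Real.cos_sq_add_sin_sq]

section InnerProductSpace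

variable {𝕜 : Type*} [RCLike 𝕜] {H : Type*} [NormedAddCommGroup H] [InnerProductSpace 𝕜 H]

theorem sq_opNorm_le_add_sq_opNorm_orthogonal {F : Type*} [NormedAddCommGroup F] [NormedSpace 𝕜 F]
    (φ : H →L[𝕜] F) (U : Submodule 𝕜 H) [U.HasOrthogonalProjection] :
    ‖φ‖ ^ 2 ≤ ‖φ ∘L U.subtypeL‖ ^ 2 + ‖φ ∘L Uᗮ.subtypeL‖ ^ 2 := by
  set a := ‖φ ∘L U.subtypeL‖
  set b := ‖φ ∘L Uᗮ.subtypeL‖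
  suffices h : ‖φ‖ ≤ √(a ^ 2 + b ^ 2) from (Real.le_sqrt (norm_nonneg _) (by positivity)).1 h
  refine φ.opNorm_le_bound (Real.sqrt_nonneg _) fun v => ?_
  set p := ‖U.orthogonalProjectionOnto v‖
  set q := ‖Uᗮ.orthogonalProjectionOnto v‖
  calc ‖φ v‖ = ‖(φ ∘L U.subtypeL) (U.orthogonalProjectionOnto v) +
          (φ ∘L Uᗮ.subtypeL) (Uᗮ.orthogonalProjectionOnto v)‖ := by
        conv_lhs => rw [← U.starProjection_add_starProjection_orthogonal v, map_add]
        rfl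
    _ ≤ a * p + b * q := norm_add_le_of_le (ContinuousLinearMap.le_opNorm _ _)
        (ContinuousLinearMap.le_opNorm _ _)
    _ ≤ √((a ^ 2 + b ^ 2) * (p ^ 2 + q ^ 2)) := Real.le_sqrt_of_sq_le <| by
        linarith [sq_nonneg (a * q - b * p)]
    _ = √(a ^ 2 + b ^ 2) * ‖v‖ := by
        rw [← U.norm_sq_eq_add_norm_sq_projection, Real.sqrt_mul (by positivity),
          Real.sqrt_sq (norm_nonneg v)]

lemma opNorm_comp_subtypeL_span_singleton_le {F : Type*} [NormedAddCommGroup F] [NormedSpace 𝕜 F]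
    (φ : H →L[𝕜] F) {x : H} (hx : ‖x‖ = 1) : ‖φ ∘L (𝕜 ∙ x).subtypeL‖ ≤ ‖φ x‖ := by
  refine ContinuousLinearMap.opNorm_le_bound _ (norm_nonneg _) ?_
  rintro ⟨_, hv⟩
  obtain ⟨c, rfl⟩ := Submodule.mem_span_singleton.1 hv
  simp [norm_smul, hx, mul_comm]

namespace IsContinuousPolynomial

variable {n : ℕ} {P : H → 𝕜} {M : ℝ}

theorem sq_norm_add_sq_norm_fderiv_le_of_inner_eq_zero (hP : IsContinuousPolynomial 𝕜 n P)
    (hM : ∀ u, ‖u‖ = 1 → ‖P u‖ ≤ M) {x y : H} (hx : ‖x‖ = 1) (hy : ‖y‖ = 1)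
    (hxy : inner 𝕜 x y = 0) :
    (n : ℝ) ^ 2 * ‖P x‖ ^ 2 + ‖fderiv 𝕜 P x y‖ ^ 2 ≤ (n : ℝ) ^ 2 * M ^ 2 := by
  let := InnerProductSpace.rclikeToReal 𝕜 H
  have := IsScalarTower.restrictScalars ℝ 𝕜 H
  obtain ⟨d, hd, hdx⟩ := RCLike.exists_norm_eq_mul_self (P x)
  obtain ⟨c, hc, hcy⟩ := RCLike.exists_norm_eq_mul_self (d * fderiv 𝕜 P x y)
  let f : 𝕜 →L[ℝ] ℝ := RCLike.reCLM ∘L ContinuousLinearMap.mul ℝ 𝕜 d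
  have hf (w : 𝕜) : f w = RCLike.re (d * w) := rfl
  have hcircle (θ : ℝ) : |f (P (Real.cos θ • x + Real.sin θ • c • y))| ≤ M := by
    rw [hf]
    refine (RCLike.abs_re_le_norm _).trans ?_
    rw [norm_mul, hd, one_mul]
    refine hM _ (norm_cos_smul_add_sin_smul hx (by rw [norm_smul, hc, hy, one_mul]) ?_ θ)
    rw [real_inner_eq_re_inner 𝕜, inner_smul_right, hxy, mul_zero, map_zero]
  have hfderiv : fderiv ℝ (fun u => f (P u)) x (c • y) = ‖fderiv 𝕜 P x y‖ := by
    have hcomp := f.hasFDerivAt.comp x ((hP.differentiable x).hasFDerivAt.restrictScalars ℝ)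
    rw [show fderiv ℝ (fun u => f (P u)) x = _ from hcomp.fderiv]
    change f (fderiv 𝕜 P x (c • y)) = _
    rw [hf, map_smul, smul_eq_mul, mul_left_comm, ← hcy, RCLike.ofReal_re, norm_mul, hd, one_mul]
  have h := (hP.restrictScalars.clm_comp f).sq_add_sq_fderiv_le_of_circle hcircle
  rwa [hfderiv, hf, ← hdx, RCLike.ofReal_re] at h

theorem sq_norm_sub_add_sq_opNorm_fderiv_le (hP : IsContinuousPolynomial 𝕜 n P)
    (hM : ∀ u, ‖u‖ = 1 → ‖P u‖ ≤ M) {x : H} (hx : ‖x‖ = 1) :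
    (n : ℝ) ^ 2 * ‖P x‖ ^ 2 - ‖fderiv 𝕜 P x x‖ ^ 2 + ‖fderiv 𝕜 P x‖ ^ 2 ≤ (n : ℝ) ^ 2 * M ^ 2 := by
  set φ := fderiv 𝕜 P x
  set K := (n : ℝ) ^ 2 * M ^ 2 - (n : ℝ) ^ 2 * ‖P x‖ ^ 2 with hKdef
  have hK : 0 ≤ K := by
    rw [hKdef, ← mul_sub]
    have hsq := pow_le_pow_left₀ (norm_nonneg _) (hM x hx) 2
    exact mul_nonneg (sq_nonneg _) (sub_nonneg.2 hsq)
  have hperp : ‖φ ∘L (𝕜 ∙ x)ᗮ.subtypeL‖ ≤ √K := by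
    refine ContinuousLinearMap.opNorm_le_of_unit_norm (Real.sqrt_nonneg K) fun y hy => ?_
    have hxy := Submodule.mem_orthogonal_singleton_iff_inner_right.1 y.2
    have h := hP.sq_norm_add_sq_norm_fderiv_le_of_inner_eq_zero hM hx hy hxy
    exact Real.le_sqrt_of_sq_le (le_sub_iff_add_le'.2 h)
  have hpyth := calc ‖φ‖ ^ 2
        ≤ ‖φ ∘L (𝕜 ∙ x).subtypeL‖ ^ 2 + ‖φ ∘L (𝕜 ∙ x)ᗮ.subtypeL‖ ^ 2 :=
      sq_opNorm_le_add_sq_opNorm_orthogonal φ _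
    _ ≤ ‖φ x‖ ^ 2 + √K ^ 2 := by
      gcongr
      exact opNorm_comp_subtypeL_span_singleton_le φ hx
    _ = ‖φ x‖ ^ 2 + K := by rw [Real.sq_sqrt hK]
  linarith

end IsContinuousPolynomial

end InnerProductSpace

section Diagonal

variable {𝕜 : Type*} [NontriviallyNormedField 𝕜] {E F : Type*} [NormedAddCommGroup E]
  [NormedSpace 𝕜 E] [NormedAddCommGroup F] [NormedSpace 𝕜 F] {n : ℕ}

lemma fderiv_diag_apply (L : ContinuousMultilinearMap 𝕜 (fun _ : Fin n => E) F) (x y : E) :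
    fderiv 𝕜 (fun u => L fun _ => u) x y = ∑ i, L (Function.update (fun _ => x) i y) := by
  have h : HasFDerivAt (fun u => L fun _ => u)
      ((L.linearDeriv fun _ => x) ∘L .pi fun _ => .id 𝕜 E) x :=
    (L.hasFDerivAt fun _ => x).comp x (ContinuousLinearMap.pi fun _ => .id 𝕜 E).hasFDerivAt
  rw [h.fderiv]
  simp [ContinuousMultilinearMap.linearDeriv_apply]

lemma fderiv_diag_apply_self (L : ContinuousMultilinearMap 𝕜 (fun _ : Fin n => E) F) (x : E) :
    fderiv 𝕜 (fun u => L fun _ => u) x x = (n : 𝕜) • L fun _ => x := by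
  simp [fderiv_diag_apply, Nat.cast_smul_eq_nsmul]

lemma fderiv_diag_smul (L : ContinuousMultilinearMap 𝕜 (fun _ : Fin n => E) F) (c : 𝕜) (x : E) :
    fderiv 𝕜 (fun u => L fun _ => u) (c • x) =
      c ^ (n - 1) • fderiv 𝕜 (fun u => L fun _ => u) x := by
  ext y
  simp only [fderiv_diag_apply, smul_apply, Finset.smul_sum]
  refine Finset.sum_congr rfl fun i _ => ?_
  exact (L.toMultilinearMap.map_update_smul_left (fun _ => x) i c y).trans (by simp)

lemma fderiv_diag_apply_of_symmetric
    {L : ContinuousMultilinearMap 𝕜 (fun _ : Fin (n + 1) => E) F}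
    (hL : ∀ (σ : Equiv.Perm (Fin (n + 1))) (v : Fin (n + 1) → E), L (v ∘ σ) = L v) (x y : E) :
    fderiv 𝕜 (fun u => L fun _ => u) x y = ((n + 1 : ℕ) : 𝕜) • L.curryLeft y fun _ => x := by
  have hcons : Function.update (fun _ : Fin (n + 1) => x) 0 y = Fin.cons y fun _ => x := by
    ext j
    cases j using Fin.cases <;> simp
  have hswap (i : Fin (n + 1)) :
      L (Function.update (fun _ => x) i y) = L.curryLeft y fun _ => x := by
    rw [← hL (Equiv.swap i 0), Function.update_comp_equiv, Equiv.symm_swap, Equiv.swap_apply_left,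
      L.curryLeft_apply, ← hcons]
    rfl
  simp only [fderiv_diag_apply, hswap, Finset.sum_const, Finset.card_univ, Fintype.card_fin,
    Nat.cast_smul_eq_nsmul]

lemma curryLeft_comp_perm {L : ContinuousMultilinearMap 𝕜 (fun _ : Fin (n + 1) => E) F}
    (hL : ∀ (σ : Equiv.Perm (Fin (n + 1))) (v : Fin (n + 1) → E), L (v ∘ σ) = L v) (y : E)
    (σ : Equiv.Perm (Fin n)) (v : Fin n → E) :
    L.curryLeft y (v ∘ σ) = L.curryLeft y v := by
  rw [L.curryLeft_apply, L.curryLeft_apply,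
    ← hL (Equiv.Perm.decomposeFin.symm (0, σ)) (Fin.cons y v)]
  congr 1
  ext k
  cases k using Fin.cases <;> simp

end Diagonal

section InnerProductSpace

variable {𝕜 : Type*} [RCLike 𝕜] {H : Type*} [NormedAddCommGroup H] [InnerProductSpace 𝕜 H]
  {n : ℕ} {M : ℝ}

lemma norm_fderiv_diag_le_of_norm_eq_one {L : ContinuousMultilinearMap 𝕜 (fun _ : Fin n => H) 𝕜}
    (hM : ∀ u, ‖u‖ = 1 → ‖L fun _ => u‖ ≤ M) {x : H} (hx : ‖x‖ = 1) :
    ‖fderiv 𝕜 (fun u => L fun _ => u) x‖ ≤ n * M := by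
  have h := (IsContinuousPolynomial.of_diag L).sq_norm_sub_add_sq_opNorm_fderiv_le hM hx
  have hM0 : 0 ≤ M := (norm_nonneg _).trans (hM x hx)
  rw [fderiv_diag_apply_self, norm_smul, RCLike.norm_natCast, mul_pow, sub_self, zero_add,
    ← mul_pow] at h
  exact (sq_le_sq₀ (norm_nonneg _) (by positivity)).1 h

theorem norm_fderiv_diag_le {L : ContinuousMultilinearMap 𝕜 (fun _ : Fin n => H) 𝕜}
    (hM : ∀ u, ‖u‖ ≤ 1 → ‖L fun _ => u‖ ≤ M) (x : H) :
    ‖fderiv 𝕜 (fun u => L fun _ => u) x‖ ≤ n * M * ‖x‖ ^ (n - 1) := by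
  have hM0 : 0 ≤ M := (norm_nonneg _).trans (hM 0 (by simp))
  obtain h | h := subsingleton_or_nontrivial H
  · rw [Subsingleton.elim (fderiv 𝕜 _ x) 0, norm_zero]
    positivity
  obtain ⟨w, hw, hxw⟩ : ∃ w : H, ‖w‖ = 1 ∧ (‖x‖ : 𝕜) • w = x := by
    obtain rfl | hx := eq_or_ne x 0
    · obtain ⟨v, hv⟩ := exists_ne (0 : H)
      exact ⟨(‖v‖⁻¹ : 𝕜) • v, norm_smul_inv_norm hv, by simp⟩
    · exact ⟨(‖x‖⁻¹ : 𝕜) • x, norm_smul_inv_norm hx, smul_inv_smul₀ (by simpa) x⟩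
  have hderiv := norm_fderiv_diag_le_of_norm_eq_one (fun u hu => hM u hu.le) hw
  conv_lhs => rw [← hxw, fderiv_diag_smul, norm_smul, norm_pow, RCLike.norm_ofReal, abs_norm]
  rw [mul_comm]
  gcongr

theorem opNorm_le_of_norm_diag_le {L : ContinuousMultilinearMap 𝕜 (fun _ : Fin n => H) 𝕜}
    (hL : ∀ (σ : Equiv.Perm (Fin n)) (v : Fin n → H), L (v ∘ σ) = L v)
    (hM : ∀ u, ‖u‖ ≤ 1 → ‖L fun _ => u‖ ≤ M) : ‖L‖ ≤ M := by
  have hM0 : 0 ≤ M := (norm_nonneg _).trans (hM 0 (by simp))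
  induction n generalizing M with
  | zero => simpa using hM 0 (by simp)
  | succ n ih =>
    rw [← L.curryLeft_norm]
    refine L.curryLeft.opNorm_le_bound hM0 fun y => ?_
    refine ih (curryLeft_comp_perm hL y) (fun u hu => ?_) (by positivity)
    have h := (fderiv 𝕜 (fun u => L fun _ => u) u).le_of_opNorm_le (norm_fderiv_diag_le hM u) y
    rw [fderiv_diag_apply_of_symmetric hL, norm_smul, RCLike.norm_natCast, mul_assoc,
      mul_assoc] at h
    refine (le_of_mul_le_mul_left h (by positivity)).trans ?_
    gcongr
    exact mul_le_of_le_one_left (norm_nonneg y) (pow_le_one₀ (norm_nonneg u) hu)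

theorem opNorm_eq_unitBallNorm_diag {L : ContinuousMultilinearMap 𝕜 (fun _ : Fin n => H) 𝕜}
    (hL : ∀ (σ : Equiv.Perm (Fin n)) (v : Fin n → H), L (v ∘ σ) = L v) :
    ‖L‖ = unitBallNorm fun u => L fun _ => u := by
  apply le_antisymm
  · exact opNorm_le_of_norm_diag_le hL fun u hu =>
      (IsContinuousPolynomial.of_diag L).norm_le_unitBallNorm hu
  · refine csSup_le ((nonempty_closedBall.2 zero_le_one).image _) ?_
    rintro _ ⟨u, hu, rfl⟩
    exact L.unit_le_opNorm ((pi_norm_const_le u).trans (mem_closedBall_zero_iff.1 hu))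

end InnerProductSpace

theorem bernstein_inequality_hilbert_general
    {𝕜 : Type*} [RCLike 𝕜] {H : Type*} [NormedAddCommGroup H] [InnerProductSpace 𝕜 H] (n : ℕ) :
    (∀ P : H → 𝕜, IsContinuousPolynomial 𝕜 n P → ∀ x : H, ‖x‖ = 1 →
        (n : ℝ) ^ 2 * ‖P x‖ ^ 2 - ‖fderiv 𝕜 P x x‖ ^ 2 + ‖fderiv 𝕜 P x‖ ^ 2
          ≤ (n : ℝ) ^ 2 * unitBallNorm P ^ 2) ∧
    (∀ F : H → 𝕜,
      (∃ L : ContinuousMultilinearMap 𝕜 (fun _ : Fin n => H) 𝕜, ∀ u, F u = L fun _ => u) →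
      ∀ x : H, ‖x‖ ≤ 1 → ‖fderiv 𝕜 F x‖ ≤ n * unitBallNorm F) ∧
    (∀ L : ContinuousMultilinearMap 𝕜 (fun _ : Fin n => H) 𝕜,
      (∀ (σ : Equiv.Perm (Fin n)) (v : Fin n → H), L (v ∘ σ) = L v) →
      ‖L‖ = unitBallNorm fun u => L fun _ => u) := by
  refine ⟨fun P hP x hx => ?_, ?_, fun L hL => opNorm_eq_unitBallNorm_diag hL⟩
  · exact hP.sq_norm_sub_add_sq_opNorm_fderiv_le (fun u hu => hP.norm_le_unitBallNorm hu.le) hx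
  · rintro F ⟨L, hF⟩ x hx
    obtain rfl := funext hF
    have hbound (u : H) (hu : ‖u‖ ≤ 1) := (IsContinuousPolynomial.of_diag L).norm_le_unitBallNorm hu
    refine (norm_fderiv_diag_le hbound x).trans (mul_le_of_le_one_right ?_ ?_)
    · exact mul_nonneg n.cast_nonneg ((norm_nonneg _).trans (hbound 0 (by simp)))
    · exact pow_le_one₀ (norm_nonneg x) hx

/-- Bernstein's inequality on a real or complex Hilbert space: if `P` is a continuous
polynomial of degree `n`, then for every unit vector `x`,
`n²|P(x)|² - |DP(x)x|² + ‖DP(x)‖² ≤ n²‖P‖²`. In particular, every continuous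
`n`-homogeneous polynomial `L̂` satisfies `‖DL̂(x)‖ ≤ n ‖L̂‖` on the closed unit ball;
equivalently, `‖L‖ = ‖L̂‖` for every continuous symmetric `n`-linear form `L`. -/
theorem bernstein_inequality_hilbert
    {𝕜 : Type*} [RCLike 𝕜] {H : Type*} [NormedAddCommGroup H]
    [InnerProductSpace 𝕜 H] [CompleteSpace H] (n : ℕ) :
    (∀ P : H → 𝕜,
      (∃ L : (j : Fin (n + 1)) → ContinuousMultilinearMap 𝕜 (fun _ : Fin (j : ℕ) => H) 𝕜,
        ∀ x, P x = ∑ j, L j (fun _ => x)) →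
      ∀ x : H, ‖x‖ = 1 →
        (n : ℝ) ^ 2 * ‖P x‖ ^ 2 - ‖fderiv 𝕜 P x x‖ ^ 2 + ‖fderiv 𝕜 P x‖ ^ 2
          ≤ (n : ℝ) ^ 2 * (sSup ((fun u => ‖P u‖) '' closedBall (0 : H) 1)) ^ 2) ∧
    (∀ F : H → 𝕜,
      (∃ L : ContinuousMultilinearMap 𝕜 (fun _ : Fin n => H) 𝕜,
        (∀ (σ : Equiv.Perm (Fin n)) (v : Fin n → H), L (v ∘ σ) = L v) ∧
        ∀ u, F u = L (fun _ => u)) →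
      ∀ x : H, ‖x‖ ≤ 1 →
        ‖fderiv 𝕜 F x‖ ≤ (n : ℝ) * sSup ((fun u => ‖F u‖) '' closedBall (0 : H) 1)) ∧
    (∀ L : ContinuousMultilinearMap 𝕜 (fun _ : Fin n => H) 𝕜,
      (∀ (σ : Equiv.Perm (Fin n)) (v : Fin n → H), L (v ∘ σ) = L v) →
      ‖L‖ = sSup ((fun u => ‖L (fun _ => u)‖) '' closedBall (0 : H) 1)) :=
  let ⟨hP, hF, hL⟩ := bernstein_inequality_hilbert_general n
  ⟨hP, fun F ⟨L, _, hFL⟩ => hF F ⟨L, hFL⟩, hL⟩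
end
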